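/- arXiv:1902.05741 — 2 statements merged into one kernel-verified Lean document; each statement's English description precedes it below -/
import Mathlib

section
/- Fix a nonnegative integer ℓ₁ and a nonnegative half-integer ℓ₂ with ℓ₂ ≠ 0. If ζ : (ℤ+ℓ₂)×(ℤ+ℓ₂) → ℂ is symmetric and satisfies relation (R), then ζ(u, v) = 0 for all u, v ∈ ℤ+ℓ₂. -/
/-!
At `m = 1`, `u = v = ℓ₂` the first two coefficients of (R) vanish, which forces `ζ(ℓ₂, ℓ₂) = 0`.
Putting `u = v = ℓ₂` with `m` arbitrary, symmetry gives `ζ(ℓ₂, v) = 0` for `v ≠ ℓ₂ + 1`; the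
remaining value `ζ(ℓ₂, ℓ₂ + 1)` is a multiple of `ζ(ℓ₂, ℓ₂ + 2) = 0`, by (R) at `m = 1`, `u = ℓ₂`.
Once the row and column through `ℓ₂` vanish, (R) at `v = ℓ₂` reads `(m - 1) ℓ₂ ζ(u, m + ℓ₂) = 0`,
so only `ζ(ℓ₂ + 1, ℓ₂ + 1)` can survive, and (R) at `m = 2` kills it.
-/

/-- The coset `ℤ + a`, written so that membership unfolds to `∃ n : ℤ, u = n + a`. It carries the
arguments of `ζ`. -/
def intCoset {K : Type*} [AddGroupWithOne K] (a : K) : Set K := {u | ∃ n : ℤ, u = n + a}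

section intCoset

variable {K : Type*} [AddGroupWithOne K]

theorem self_mem_intCoset (a : K) : a ∈ intCoset a := ⟨0, by simp⟩

theorem intCast_add_mem_intCoset {a u : K} (m : ℤ) (hu : u ∈ intCoset a) :
    (m : K) + u ∈ intCoset a := by
  obtain ⟨n, rfl⟩ := hu
  exact ⟨m + n, by push_cast; rw [add_assoc]⟩

end intCoset

/-- Relation (R) on the central extension terms `ζ(u, v)`, for parameters in a commutative ring `K`
and values in a `K`-module. `ζ` is a total function, constrained on `ℤ + ℓ₂` only. -/
def CentralTermRelation {K M : Type*} [CommRing K] [AddCommGroup M] [Module K M]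
    (ℓ₁ ℓ₂ : K) (ζ : K → K → M) : Prop :=
  ∀ (m : ℤ) (u v : K), u ∈ intCoset ℓ₂ → v ∈ intCoset ℓ₂ →
    ((m : K) * ℓ₂ - u) • ζ (m + u) v + ((m : K) * ℓ₂ - v) • ζ u (m + v)
      + ((m : K) * ℓ₁ + m + u + v) • ζ u v = 0

namespace CentralTermRelation

variable {K M : Type*} [CommRing K] [IsDomain K] [AddCommGroup M] [Module K M]
  [Module.IsTorsionFree K M] {ℓ₁ ℓ₂ : K} {ζ : K → K → M}

theorem base_base_eq_zero (hR : CentralTermRelation ℓ₁ ℓ₂ ζ) (h₁ : ℓ₁ + 2 * ℓ₂ + 1 ≠ 0) :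
    ζ ℓ₂ ℓ₂ = 0 := by
  have h := hR 1 ℓ₂ ℓ₂ (self_mem_intCoset ℓ₂) (self_mem_intCoset ℓ₂)
  have key : (ℓ₁ + 2 * ℓ₂ + 1) • ζ ℓ₂ ℓ₂ = 0 := by
    push_cast at h
    linear_combination (norm := module) h
  exact (smul_eq_zero.mp key).resolve_left h₁

theorem base_eq_zero_of_ne [CharZero K] (hR : CentralTermRelation ℓ₁ ℓ₂ ζ)
    (hsym : ∀ u v, u ∈ intCoset ℓ₂ → v ∈ intCoset ℓ₂ → ζ u v = ζ v u)
    (hℓ₂ : ℓ₂ ≠ 0) (hbase : ζ ℓ₂ ℓ₂ = 0) {v : K} (hv : v ∈ intCoset ℓ₂) (hne : v ≠ 1 + ℓ₂) :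
    ζ ℓ₂ v = 0 := by
  have hmem := self_mem_intCoset ℓ₂
  obtain ⟨m, rfl⟩ := hv
  have hm : (m : K) - 1 ≠ 0 := fun h => hne (by rw [sub_eq_zero.mp h])
  have h := hR m ℓ₂ ℓ₂ hmem hmem
  rw [hsym _ ℓ₂ (intCast_add_mem_intCoset m hmem) hmem, hbase] at h
  have key : (2 * (((m : K) - 1) * ℓ₂)) • ζ ℓ₂ (m + ℓ₂) = 0 := by
    linear_combination (norm := module) h
  exact (smul_eq_zero.mp key).resolve_left (mul_ne_zero two_ne_zero (mul_ne_zero hm hℓ₂))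

theorem base_eq_zero [CharZero K] (hR : CentralTermRelation ℓ₁ ℓ₂ ζ)
    (hsym : ∀ u v, u ∈ intCoset ℓ₂ → v ∈ intCoset ℓ₂ → ζ u v = ζ v u)
    (hℓ₂ : ℓ₂ ≠ 0) (h₁ : ℓ₁ + 2 * ℓ₂ + 1 ≠ 0) (h₂ : ℓ₁ + 2 * ℓ₂ + 2 ≠ 0)
    {v : K} (hv : v ∈ intCoset ℓ₂) : ζ ℓ₂ v = 0 := by
  have hrow {w : K} := hR.base_eq_zero_of_ne hsym hℓ₂ (hR.base_base_eq_zero h₁) (v := w)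
  by_cases hne : v = 1 + ℓ₂
  · subst hne
    have hnext : ζ ℓ₂ (1 + (1 + ℓ₂)) = 0 :=
      hrow (by simpa using intCast_add_mem_intCoset 1 hv) (by simp)
    have h := hR 1 ℓ₂ (1 + ℓ₂) (self_mem_intCoset ℓ₂) hv
    rw [Int.cast_one, hnext] at h
    have key : (ℓ₁ + 2 * ℓ₂ + 2) • ζ ℓ₂ (1 + ℓ₂) = 0 := by
      linear_combination (norm := module) h
    exact (smul_eq_zero.mp key).resolve_left h₂
  · exact hrow hv hne

theorem eq_zero_of_right_ne (hR : CentralTermRelation ℓ₁ ℓ₂ ζ) (hℓ₂ : ℓ₂ ≠ 0)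
    (hcol : ∀ u ∈ intCoset ℓ₂, ζ u ℓ₂ = 0) {u v : K} (hu : u ∈ intCoset ℓ₂)
    (hv : v ∈ intCoset ℓ₂) (hne : v ≠ 1 + ℓ₂) : ζ u v = 0 := by
  obtain ⟨m, rfl⟩ := hv
  have hm : (m : K) - 1 ≠ 0 := fun h => hne (by rw [sub_eq_zero.mp h])
  have h := hR m u ℓ₂ hu (self_mem_intCoset ℓ₂)
  rw [hcol _ (intCast_add_mem_intCoset m hu), hcol u hu] at h
  have key : (((m : K) - 1) * ℓ₂) • ζ u (m + ℓ₂) = 0 := by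
    linear_combination (norm := module) h
  exact (smul_eq_zero.mp key).resolve_left (mul_ne_zero hm hℓ₂)

theorem one_add_base_eq_zero [CharZero K] (hR : CentralTermRelation ℓ₁ ℓ₂ ζ)
    (hℓ₂' : ℓ₂ + 1 ≠ 0)
    (hoff : ∀ u v, u ∈ intCoset ℓ₂ → v ∈ intCoset ℓ₂ → u ≠ 1 + ℓ₂ ∨ v ≠ 1 + ℓ₂ → ζ u v = 0) :
    ζ (1 + ℓ₂) (1 + ℓ₂) = 0 := by
  have hu : -1 + ℓ₂ ∈ intCoset ℓ₂ := ⟨-1, by simp⟩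
  have hv : 1 + ℓ₂ ∈ intCoset ℓ₂ := ⟨1, by simp⟩
  have hne : -1 + ℓ₂ ≠ 1 + ℓ₂ := by
    rw [Ne, add_left_inj]
    norm_num
  have h := hR 2 (-1 + ℓ₂) (1 + ℓ₂) hu hv
  rw [hoff _ _ hu (intCast_add_mem_intCoset 2 hv) (.inl hne), hoff _ _ hu hv (.inl hne)] at h
  have hcorner : ((2 : ℤ) : K) + (-1 + ℓ₂) = 1 + ℓ₂ := by push_cast; ring
  have key : (ℓ₂ + 1) • ζ (1 + ℓ₂) (1 + ℓ₂) = 0 := by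
    rw [hcorner] at h
    push_cast at h
    linear_combination (norm := module) h
  exact (smul_eq_zero.mp key).resolve_left hℓ₂'

end CentralTermRelation

theorem zeta_sym_vanishes_ell2_ne_zero_general {K M : Type*} [CommRing K] [IsDomain K] [CharZero K]
    [AddCommGroup M] [Module K M] [Module.IsTorsionFree K M] {ℓ₁ ℓ₂ : K} (hℓ₂ : ℓ₂ ≠ 0)
    (hℓ₂' : ℓ₂ + 1 ≠ 0) (h₁ : ℓ₁ + 2 * ℓ₂ + 1 ≠ 0) (h₂ : ℓ₁ + 2 * ℓ₂ + 2 ≠ 0) {ζ : K → K → M}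
    (hsym : ∀ u v, u ∈ intCoset ℓ₂ → v ∈ intCoset ℓ₂ → ζ u v = ζ v u)
    (hR : CentralTermRelation ℓ₁ ℓ₂ ζ) (u v : K) (hu : u ∈ intCoset ℓ₂) (hv : v ∈ intCoset ℓ₂) :
    ζ u v = 0 := by
  have hcol : ∀ w ∈ intCoset ℓ₂, ζ w ℓ₂ = 0 := fun w hw =>
    (hsym w ℓ₂ hw (self_mem_intCoset ℓ₂)).trans (hR.base_eq_zero hsym hℓ₂ h₁ h₂ hw)
  have hoff (x y : K) (hx : x ∈ intCoset ℓ₂) (hy : y ∈ intCoset ℓ₂)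
      (hne : x ≠ 1 + ℓ₂ ∨ y ≠ 1 + ℓ₂) : ζ x y = 0 := by
    rcases hne with hx' | hy'
    · exact (hsym x y hx hy).trans (hR.eq_zero_of_right_ne hℓ₂ hcol hy hx hx')
    · exact hR.eq_zero_of_right_ne hℓ₂ hcol hx hy hy'
  by_cases hcorner : u = 1 + ℓ₂ ∧ v = 1 + ℓ₂
  · rw [hcorner.1, hcorner.2]
    exact hR.one_add_base_eq_zero hℓ₂' hoff
  · exact hoff u v hu hv (not_and_or.mp hcorner)

/-- Let `ℓ₁` be a nonnegative integer and `ℓ₂` a nonnegative half-integer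
with `ℓ₂ ≠ 0`. If `ζ : (ℤ+ℓ₂)×(ℤ+ℓ₂) → ℂ` is symmetric and satisfies relation (R),
then `ζ(u, v) = 0` for all `u, v ∈ ℤ+ℓ₂`. -/
theorem zeta_sym_vanishes_ell2_ne_zero (ℓ₁ : ℕ) (ℓ₂ : ℚ)
    (hhalf : ∃ k : ℕ, 2 * ℓ₂ = (k : ℚ))
    (hℓ₂ : ℓ₂ ≠ 0)
    (ζ : ℚ → ℚ → ℂ)
    (hsym : ∀ u v : ℚ, (∃ n : ℤ, u = (n : ℚ) + ℓ₂) → (∃ n : ℤ, v = (n : ℚ) + ℓ₂) →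
      ζ u v = ζ v u)
    (hR : ∀ (m : ℤ) (u v : ℚ), (∃ n : ℤ, u = (n : ℚ) + ℓ₂) → (∃ n : ℤ, v = (n : ℚ) + ℓ₂) →
      ((m : ℂ) * (ℓ₂ : ℂ) - (u : ℂ)) * ζ ((m : ℚ) + u) v
      + ((m : ℂ) * (ℓ₂ : ℂ) - (v : ℂ)) * ζ u ((m : ℚ) + v)
      + ((m : ℂ) * (ℓ₁ : ℂ) + (m : ℂ) + (u : ℂ) + (v : ℂ)) * ζ u v = 0) :
    ∀ u v : ℚ, (∃ n : ℤ, u = (n : ℚ) + ℓ₂) → (∃ n : ℤ, v = (n : ℚ) + ℓ₂) →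
      ζ u v = 0 := by
  have hnonneg : 0 ≤ ℓ₂ := by
    obtain ⟨k, hk⟩ := hhalf
    linarith [k.cast_nonneg (α := ℚ)]
  exact zeta_sym_vanishes_ell2_ne_zero_general (ℓ₁ := (ℓ₁ : ℚ)) hℓ₂ (by positivity)
    (by positivity) (by positivity) hsym
    fun m u v hu hv => by simpa [Rat.smul_def] using hR m u v hu hv
end

section
/- Let ℓ₂ = 0 and let ℓ₁ be a nonnegative integer with ℓ₁ ≠ 0 and ℓ₁ ≠ 1. If ζ : ℤ×ℤ → ℂ is symmetric and satisfies relation (R), i.e. −u·ζ(m+u, v) − v·ζ(u, m+v) + (mℓ₁ + m + u + v)·ζ(u, v) = 0 for all m, u, v ∈ ℤ, then ζ(u, v) = 0 for all u, v ∈ ℤ. -/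
/-!
Shifting by `m = -u` moves the first index to `0`, where `ζ` vanishes; what is left is the
two-term recurrence `v ζ(u, v - u) = (v - uℓ) ζ(u, v)`. At `v = u` it gives `ζ(u, u) = 0`, and the
relation based at `(u, u)` then makes `ζ` antisymmetric.
If `ℓ ≠ 2`, the recurrence at `v = 2u` also gives `ζ(u, 2u) = 0`, and the relation based at
`(u, 2u)` becomes `ζ(2u, v) = 2 ζ(u, u + v)`. Transporting the recurrence with step `2u` along this
identity and comparing it with two steps of length `u` leaves `u² ℓ(ℓ + 1) ζ(u, v) = 0`.
For `ℓ = 2` there is the antisymmetric solution `ζ(u, v) = uv(u - v)`, but a symmetric `ζ` is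
symmetric and antisymmetric at once, hence `0`.
-/

/-- Relation (R) at `ℓ₂ = 0`, which the graded Jacobi identities impose on the central terms
`ζ(u, v)`. The parameter `ℓ` stands for `ℓ₁` and may be any element of the ring of values. -/
def JacobiRelation {R : Type*} [CommRing R] (ℓ : R) (ζ : ℤ → ℤ → R) : Prop :=
  ∀ m u v : ℤ,
    -(u : R) * ζ (m + u) v - (v : R) * ζ u (m + v)
      + ((m : R) * ℓ + (m : R) + (u : R) + (v : R)) * ζ u v = 0

namespace JacobiRelation

variable {R : Type*} [CommRing R] {ℓ : R} {ζ : ℤ → ℤ → R}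

theorem swap (h : JacobiRelation ℓ ζ) : JacobiRelation ℓ (fun u v => ζ v u) := fun m u v => by
  linear_combination h m v u

variable [NoZeroDivisors R]

theorem apply_zero_zero (h : JacobiRelation ℓ ζ) (hneg : ℓ ≠ -1) : ζ 0 0 = 0 := by
  have key : (ℓ + 1) * ζ 0 0 = 0 := by simpa using h 1 0 0
  exact (mul_eq_zero.mp key).resolve_left (mt eq_neg_of_add_eq_zero_left hneg)

variable [CharZero R]

theorem apply_zero_right (h : JacobiRelation ℓ ζ) (hneg : ℓ ≠ -1) (h0 : ℓ ≠ 0) (u : ℤ) :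
    ζ u 0 = 0 := by
  obtain rfl | hu := eq_or_ne u 0
  · exact h.apply_zero_zero hneg
  have key : u * ℓ * ζ u 0 = 0 := by
    have hR := h (-u) u 0
    rw [neg_add_cancel, h.apply_zero_zero hneg] at hR
    push_cast at hR
    linear_combination -hR
  exact (mul_eq_zero.mp key).resolve_left (mul_ne_zero (Int.cast_ne_zero.mpr hu) h0)

theorem apply_zero_left (h : JacobiRelation ℓ ζ) (hneg : ℓ ≠ -1) (h0 : ℓ ≠ 0) (v : ℤ) :
    ζ 0 v = 0 :=
  h.swap.apply_zero_right hneg h0 v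

theorem mul_apply_sub (h : JacobiRelation ℓ ζ) (hneg : ℓ ≠ -1) (h0 : ℓ ≠ 0) (u v : ℤ) :
    v * ζ u (v - u) = (v - u * ℓ) * ζ u v := by
  have hR := h (-u) u v
  rw [neg_add_cancel, h.apply_zero_left hneg h0, neg_add_eq_sub] at hR
  push_cast at hR
  linear_combination -hR

theorem apply_self (h : JacobiRelation ℓ ζ) (hneg : ℓ ≠ -1) (h0 : ℓ ≠ 0) (h1 : ℓ ≠ 1) (u : ℤ) :
    ζ u u = 0 := by
  obtain rfl | hu := eq_or_ne u 0
  · exact h.apply_zero_zero hneg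
  have key : u * (ℓ - 1) * ζ u u = 0 := by
    have hrec := h.mul_apply_sub hneg h0 u u
    rw [sub_self, h.apply_zero_right hneg h0] at hrec
    linear_combination hrec
  exact (mul_eq_zero.mp key).resolve_left
    (mul_ne_zero (Int.cast_ne_zero.mpr hu) (sub_ne_zero.mpr h1))

theorem apply_swap (h : JacobiRelation ℓ ζ) (hneg : ℓ ≠ -1) (h0 : ℓ ≠ 0) (h1 : ℓ ≠ 1) (u v : ℤ) :
    ζ v u = -ζ u v := by
  obtain rfl | hu := eq_or_ne u 0
  · rw [h.apply_zero_right hneg h0, h.apply_zero_left hneg h0, neg_zero]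
  have hR := h (v - u) u u
  rw [sub_add_cancel, h.apply_self hneg h0 h1] at hR
  refine mul_left_cancel₀ (Int.cast_ne_zero.mpr hu : (u : R) ≠ 0) ?_
  linear_combination -hR

theorem apply_two_mul_self (h : JacobiRelation ℓ ζ) (hneg : ℓ ≠ -1) (h0 : ℓ ≠ 0) (h1 : ℓ ≠ 1)
    (h2 : ℓ ≠ 2) (u : ℤ) : ζ u (2 * u) = 0 := by
  obtain rfl | hu := eq_or_ne u 0
  · exact h.apply_zero_left hneg h0 _
  have key : u * (ℓ - 2) * ζ u (2 * u) = 0 := by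
    have hrec := h.mul_apply_sub hneg h0 u (2 * u)
    rw [two_mul, add_sub_cancel_right, h.apply_self hneg h0 h1, ← two_mul] at hrec
    push_cast at hrec
    linear_combination hrec
  exact (mul_eq_zero.mp key).resolve_left
    (mul_ne_zero (Int.cast_ne_zero.mpr hu) (sub_ne_zero.mpr h2))

theorem apply_two_mul_left (h : JacobiRelation ℓ ζ) (hneg : ℓ ≠ -1) (h0 : ℓ ≠ 0) (h1 : ℓ ≠ 1)
    (h2 : ℓ ≠ 2) (u v : ℤ) : ζ (2 * u) v = 2 * ζ u (u + v) := by
  obtain rfl | hu := eq_or_ne u 0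
  · simp only [mul_zero, h.apply_zero_left hneg h0]
  have hR := h (v - u) u (2 * u)
  rw [sub_add_cancel, h.apply_two_mul_self hneg h0 h1 h2, h.apply_swap hneg h0 h1 (2 * u) v,
    show v - u + 2 * u = u + v by ring] at hR
  push_cast at hR
  refine mul_left_cancel₀ (Int.cast_ne_zero.mpr hu : (u : R) ≠ 0) ?_
  linear_combination hR

theorem eq_zero_of_ne_two (h : JacobiRelation ℓ ζ) (hneg : ℓ ≠ -1) (h0 : ℓ ≠ 0) (h1 : ℓ ≠ 1)
    (h2 : ℓ ≠ 2) (u v : ℤ) : ζ u v = 0 := by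
  obtain rfl | hu := eq_or_ne u 0
  · exact h.apply_zero_left hneg h0 v
  have first_step : v * ζ u (v - u) = (v - u * ℓ) * ζ u v := h.mul_apply_sub hneg h0 u v
  have second_step : (v - u) * ζ u (v - 2 * u) = (v - u - u * ℓ) * ζ u (v - u) := by
    have hrec := h.mul_apply_sub hneg h0 u (v - u)
    rw [sub_sub, ← two_mul] at hrec
    exact_mod_cast hrec
  have double_step : (v - u) * ζ u (v - 2 * u) = (v - u - 2 * u * ℓ) * ζ u v := by
    have hrec := h.mul_apply_sub hneg h0 (2 * u) (v - u)
    rw [h.apply_two_mul_left hneg h0 h1 h2, h.apply_two_mul_left hneg h0 h1 h2,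
      show u + (v - u - 2 * u) = v - 2 * u by ring, add_sub_cancel] at hrec
    push_cast at hrec
    refine mul_left_cancel₀ (two_ne_zero : (2 : R) ≠ 0) ?_
    linear_combination hrec
  have key : (u : R) ^ 2 * (ℓ * (ℓ + 1)) * ζ u v = 0 := by
    linear_combination v * double_step - v * second_step - (v - u - u * ℓ) * first_step
  exact (mul_eq_zero.mp key).resolve_left <|
    mul_ne_zero (pow_ne_zero 2 (Int.cast_ne_zero.mpr hu))
      (mul_ne_zero h0 (mt eq_neg_of_add_eq_zero_left hneg))

end JacobiRelation

theorem zeta_sym_vanishes_ell1_generic_general {R : Type*} [CommRing R] [NoZeroDivisors R]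
    [CharZero R] {ℓ : R} (hneg : ℓ ≠ -1) (h0 : ℓ ≠ 0) (h1 : ℓ ≠ 1) {ζ : ℤ → ℤ → R}
    (hsym : ℓ = 2 → ∀ u v : ℤ, ζ u v = ζ v u) (h : JacobiRelation ℓ ζ) (u v : ℤ) :
    ζ u v = 0 := by
  obtain h2 | h2 := eq_or_ne ℓ 2
  · exact self_eq_neg.mp ((hsym h2 u v).trans (h.apply_swap hneg h0 h1 u v))
  · exact h.eq_zero_of_ne_two hneg h0 h1 h2 u v

/-- Let `ℓ₂ = 0` and let `ℓ₁` be a nonnegative integer with `ℓ₁ ≠ 0` and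
`ℓ₁ ≠ 1`. If `ζ : ℤ×ℤ → ℂ` is symmetric and satisfies
`−u·ζ(m+u, v) − v·ζ(u, m+v) + (mℓ₁ + m + u + v)·ζ(u, v) = 0` for all `m, u, v ∈ ℤ`,
then `ζ(u, v) = 0` for all `u, v ∈ ℤ`. -/
theorem zeta_sym_vanishes_ell1_generic (ℓ₁ : ℕ) (hℓ0 : ℓ₁ ≠ 0) (hℓ1 : ℓ₁ ≠ 1)
    (ζ : ℤ → ℤ → ℂ)
    (hsym : ∀ u v : ℤ, ζ u v = ζ v u)
    (hR : ∀ m u v : ℤ,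
      -(u : ℂ) * ζ (m + u) v - (v : ℂ) * ζ u (m + v)
      + ((m : ℂ) * (ℓ₁ : ℂ) + (m : ℂ) + (u : ℂ) + (v : ℂ)) * ζ u v = 0) :
    ∀ u v : ℤ, ζ u v = 0 := by
  have hneg : (ℓ₁ : ℂ) ≠ -1 := fun h => Nat.cast_add_one_ne_zero ℓ₁ (eq_neg_iff_add_eq_zero.mp h)
  exact zeta_sym_vanishes_ell1_generic_general hneg (Nat.cast_ne_zero.mpr hℓ0)
    (Nat.cast_ne_one.mpr hℓ1) (fun _ => hsym) hR
end
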